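/- For all integers k,d ≥ 1 and n ≥ 0, the number C^d_{k,n} equals both: (1) the number of binary trees with n internal nodes that avoid comb_k^1 at every left depth at least d−1, and (2) the number of Dyck paths of length 2n that avoid DU^k at every height at least d. -/

import Mathlib

/-- Full binary trees (every internal node has exactly two children). -/
inductive BTree : Type
  | leaf : BTree
  | node : BTree → BTree → BTree
deriving DecidableEq

namespace BTree

/-- Number of leaves of a full binary tree. -/
def numLeaves : BTree → ℕ
  | leaf => 1
  | node l r => l.numLeaves + r.numLeaves

/-- The list of pairs (left depth, right depth) of the leaves, in preorder. -/
def leafDepths : BTree → List (ℕ × ℕ)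
  | leaf => [(0, 0)]
  | node l r =>
      (l.leafDepths.map fun p => (p.1 + 1, p.2)) ++ (r.leafDepths.map fun p => (p.1, p.2 + 1))

/-- The left depth sequence `ld(t)` of the leaves of `t`, in preorder. -/
def ld (t : BTree) : List ℕ := t.leafDepths.map Prod.fst

/-- The right depth sequence `rd(t)` of the leaves of `t`, in preorder. -/
def rd (t : BTree) : List ℕ := t.leafDepths.map Prod.snd

end BTree

/-- `b ~^d c` : the sequences have equal length and agree at every position where
either entry is `< d`. -/
def DepthEq (d : ℕ) : List ℕ → List ℕ → Prop :=
  List.Forall₂ (fun a b => min a b < d → a = b)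

/-- `b ~_k c` : entrywise congruence mod `k` (and equal length). -/
def ModListEq (k : ℕ) : List ℕ → List ℕ → Prop :=
  List.Forall₂ (fun a b => a % k = b % k)

/-- The relation `t ~ t'` iff `ld(t) ~^d ld(t')` and `rd(t) ~^e rd(t')`. -/
def DeRel (d e : ℕ) (t t' : BTree) : Prop :=
  DepthEq d t.ld t'.ld ∧ DepthEq e t.rd t'.rd

/-- The relation `t ~ t'` iff `ld(t) ~_k^d ld(t')` (i.e. `ld(t) ~_k ld(t')` and
`ld(t) ~^d ld(t')`). -/
def DkRel (d k : ℕ) (t t' : BTree) : Prop :=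
  ModListEq k t.ld t'.ld ∧ DepthEq d t.ld t'.ld

/-- `T_n`: full binary trees with `n+1` leaves. -/
def Tn (n : ℕ) : Type := {t : BTree // t.numLeaves = n + 1}

/-- `C^{d,e}_n`: the number of equivalence classes of the relation `DeRel d e` on `T_n`. -/
noncomputable def Cde (d e n : ℕ) : ℕ :=
  Nat.card (Quot (fun t t' : Tn n => DeRel d e t.1 t'.1))

/-- `C^d_{k,n}`: the number of equivalence classes of `ld(t) ~_k^d ld(t')` on `T_n`. -/
noncomputable def Cdk (d k n : ℕ) : ℕ :=
  Nat.card (Quot (fun t t' : Tn n => DkRel d k t.1 t'.1))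

/-- Directions to a left or right child. -/
inductive Dir : Type
  | L : Dir
  | R : Dir
deriving DecidableEq

/-- The maximal subtree rooted at the node at position `p` (if such a node exists). -/
def subtreeAt : BTree → List Dir → Option BTree
  | t, [] => some t
  | BTree.leaf, _ :: _ => none
  | BTree.node l _, Dir.L :: p => subtreeAt l p
  | BTree.node _ r, Dir.R :: p => subtreeAt r p

/-- Replace the maximal subtree rooted at position `p` by `s` (if the position exists). -/
def replaceAt : BTree → List Dir → BTree → Option BTree
  | _, [], s => some s
  | BTree.leaf, _ :: _, _ => none
  | BTree.node l r, Dir.L :: p, s => (replaceAt l p s).map fun l' => BTree.node l' r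
  | BTree.node l r, Dir.R :: p, s => (replaceAt r p s).map fun r' => BTree.node l r'

/-- `leftAssoc t₀ [t₁,…,t_m] = t₀ ∧ t₁ ∧ ⋯ ∧ t_m` with `∧` performed left to right. -/
def leftAssoc : BTree → List BTree → BTree := List.foldl BTree.node

/-- `t'` is obtained from `t` by a right `k`-rotation at the node at position `p`:
the maximal subtree `t₀ ∧ t₁ ∧ ⋯ ∧ t_{k+1}` rooted there (with `∧` performed left to
right) is replaced by `t₀ ∧ (t₁ ∧ ⋯ ∧ t_{k+1})`.  The left depth of that node is
`p.count Dir.L`. -/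
def IsRightKRot (k : ℕ) (p : List Dir) (t t' : BTree) : Prop :=
  ∃ (t₀ t₁ : BTree) (rest : List BTree), rest.length = k ∧
    subtreeAt t p = some (leftAssoc t₀ (t₁ :: rest)) ∧
    replaceAt t p (BTree.node t₀ (leftAssoc t₁ rest)) = some t'

/-- `IsTopOf s u`: `s` is a subtree of `u` rooted at the root of `u`. -/
def IsTopOf : BTree → BTree → Prop
  | BTree.leaf, _ => True
  | BTree.node l r, BTree.node l' r' => IsTopOf l l' ∧ IsTopOf r r'
  | BTree.node _ _, BTree.leaf => False

/-- `t` contains `s` at left depth `δ`: `t` has a subtree equal to `s` rooted at a node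
of left depth `δ`. -/
def ContainsAt (t s : BTree) (δ : ℕ) : Prop :=
  ∃ (p : List Dir) (u : BTree), subtreeAt t p = some u ∧ p.count Dir.L = δ ∧ IsTopOf s u

/-- `t` avoids `s` at left depth `δ`. -/
def AvoidsAt (t s : BTree) (δ : ℕ) : Prop := ¬ ContainsAt t s δ

/-- `comb_k`: the left-to-right `∧`-product of `k+1` single leaves. -/
def comb (k : ℕ) : BTree := leftAssoc BTree.leaf (List.replicate k BTree.leaf)

/-- `comb_k^1 := t₀ ∧ comb_k` with `t₀` a single leaf. -/
def comb1 (k : ℕ) : BTree := BTree.node BTree.leaf (comb k)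

/-- One left `k`-rotation step, at a node of left depth at least `d-1`, from `t` to `t'`. -/
def LeftRotStep (d k : ℕ) (t t' : BTree) : Prop :=
  ∃ p : List Dir, d - 1 ≤ p.count Dir.L ∧ IsRightKRot k p t' t

/-- The `(d;k)`-order: `s ≤ t` iff `s` is obtained from `t` by finitely many left
`k`-rotations at nodes of left depth at least `d-1`. -/
def dkLE (d k : ℕ) (s t : BTree) : Prop := Relation.ReflTransGen (LeftRotStep d k) t s

/-- `t` is `(d;k)`-minimal. -/
def dkMinimal (d k : ℕ) (t : BTree) : Prop := ∀ s, dkLE d k s t → s = t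

/-- `t` is `(d;k)`-maximal. -/
def dkMaximal (d k : ℕ) (t : BTree) : Prop := ∀ s, dkLE d k t s → s = t

/-- Steps of a lattice path: `U = (1,1)` and `D = (1,-1)`. -/
inductive Step : Type
  | U : Step
  | D : Step
deriving DecidableEq

/-- A Dyck path of length `2n`: `n` up-steps, `n` down-steps, and every prefix has at
least as many `U`s as `D`s. -/
def IsDyck (n : ℕ) (w : List Step) : Prop :=
  w.count Step.U = n ∧ w.count Step.D = n ∧
    ∀ p : List Step, p <+: w → p.count Step.D ≤ p.count Step.U

/-- `w` avoids `DU^k` at every height at least `d`: any occurrence of a consecutive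
subpath `D U^k` starts at a height `< d`. -/
def AvoidsDUk (k d : ℕ) (w : List Step) : Prop :=
  ∀ l₁ l₂ : List Step, w = l₁ ++ Step.D :: (List.replicate k Step.U ++ l₂) →
    (l₁.count Step.U : ℤ) - (l₁.count Step.D : ℤ) < (d : ℤ)

/-!
Both counts are compared with the sequences `ld(t)`. A list is the left depth sequence of a (unique)
tree iff it ends in `0`, all its other entries are positive, and each entry exceeds its successor
by at most one; the heights at which the down-steps of a Dyck path start, followed by a final `0`,
range bijectively over the same lists. An occurrence of `comb_k^1` at left depth at least `d - 1`,
or of `DU^k` at height at least `d`, is an entry `a ≥ d` whose successor is at least `a + k - 1`.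

Reading a sequence from right to left, an entry `a ≥ d` followed by `b` may be changed within its
class mod `k` as long as it stays at most `b + 1`. Exactly one choice lies in the window
`(b + 1 - k, b + 1]`, which is the avoidance condition, so every class contains exactly one
avoiding sequence.
-/

theorem card_quot_eq_card_subtype {α : Type*} {r : α → α → Prop} (hr : Equivalence r)
    {p : α → Prop} (h : ∀ x, ∃! y, p y ∧ r x y) : Nat.card (Quot r) = Nat.card {x // p x} := by
  refine (Nat.card_congr (Equiv.ofBijective (fun x : {x // p x} => Quot.mk r x) ⟨?_, ?_⟩)).symm
  · intro x y hxy
    exact Subtype.ext ((h x).unique ⟨x.2, hr.refl x⟩ ⟨y.2, (hr.quot_mk_eq_iff _ _).1 hxy⟩)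
  · rintro ⟨x⟩
    obtain ⟨y, hy, hxy⟩ := (h x).exists
    exact ⟨⟨y, hy⟩, (Quot.sound hxy).symm⟩

theorem forall_prefix_cons_iff {α : Type*} {x : α} {l : List α} {p : List α → Prop} :
    (∀ q, q <+: x :: l → p q) ↔ p [] ∧ ∀ q, q <+: l → p (x :: q) := by
  simp only [List.prefix_cons_iff, or_imp, forall_and, forall_eq]
  exact and_congr_right' ⟨fun h q hq => h _ ⟨q, rfl, hq⟩, fun h _ ⟨q, hxq, hq⟩ => hxq ▸ h q hq⟩

section TruncMod

variable {d k : ℕ}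

/-- The label of an entry under `~_k^d`: entries below `d` are kept, the others only remember their
residue mod `k`. The shift by `d` keeps the two kinds of labels apart. -/
def truncMod (d k a : ℕ) : ℕ := if a < d then a else d + a % k

theorem truncMod_eq_iff {a b : ℕ} :
    truncMod d k a = truncMod d k b ↔ a % k = b % k ∧ (min a b < d → a = b) := by
  grind [truncMod]

theorem eq_of_truncMod_eq {a a' b : ℕ} (ha : a ≤ b) (ha' : a' ≤ b) (hlt : d ≤ a → b < a + k)
    (hlt' : d ≤ a' → b < a' + k) (h : truncMod d k a = truncMod d k a') : a = a' := by
  obtain ⟨hmod, hmin⟩ := truncMod_eq_iff.1 h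
  rcases lt_or_ge (min a a') d with hd | hd
  · exact hmin hd
  · have hb := hlt (by omega)
    have hb' := hlt' (by omega)
    exact Nat.ModEq.eq_of_abs_lt hmod (abs_lt.2 ⟨by omega, by omega⟩)

theorem exists_truncMod_eq (d : ℕ) {a b : ℕ} (hk : 1 ≤ k) (hab : a ≤ b) :
    ∃ x, a ≤ x ∧ x ≤ b ∧ (d ≤ x → b < x + k) ∧ truncMod d k a = truncMod d k x := by
  rcases lt_or_ge a d with hd | hd
  · exact ⟨a, le_rfl, hab, by omega, rfl⟩
  · have hlt : (b - a) % k < k := Nat.mod_lt _ hk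
    have hdiv : (b - a) % k + k * ((b - a) / k) = b - a := Nat.mod_add_div _ _
    refine ⟨a + k * ((b - a) / k), by omega, by omega, by omega, truncMod_eq_iff.2 ⟨?_, by omega⟩⟩
    exact (Nat.add_mul_mod_self_left _ _ _).symm

theorem modListEq_and_depthEq_iff : ∀ {b c : List ℕ},
    ModListEq k b c ∧ DepthEq d b c ↔ b.map (truncMod d k) = c.map (truncMod d k)
  | [], [] | [], _ :: _ | _ :: _, [] => by simp [ModListEq, DepthEq]
  | x :: b, y :: c => by
    rw [List.map_cons, List.map_cons, List.cons.injEq, ← modListEq_and_depthEq_iff,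
      truncMod_eq_iff]
    simp only [ModListEq, DepthEq, List.forall₂_cons]
    tauto

theorem dkRel_iff {t t' : BTree} :
    DkRel d k t t' ↔ t.ld.map (truncMod d k) = t'.ld.map (truncMod d k) :=
  modListEq_and_depthEq_iff

theorem dkRel_equivalence : Equivalence (DkRel d k) where
  refl _ := dkRel_iff.2 rfl
  symm h := dkRel_iff.2 (dkRel_iff.1 h).symm
  trans h h' := dkRel_iff.2 ((dkRel_iff.1 h).trans (dkRel_iff.1 h'))

end TruncMod

/-- The lists arising as left depth sequences of full binary trees. -/
inductive IsLeftDepthSeq : List ℕ → Prop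
  | zero : IsLeftDepthSeq [0]
  | cons {a b : ℕ} {s : List ℕ} (ha : 1 ≤ a) (hab : a ≤ b + 1) (hs : IsLeftDepthSeq (b :: s)) :
      IsLeftDepthSeq (a :: b :: s)

/-- No rise by `k - 1` or more starts at an entry `≥ d`. On left depth sequences this expresses
avoidance of `comb_k^1` at left depths at least `d - 1`, and on the descent heights of a Dyck path
avoidance of `DU^k` at heights at least `d`. -/
def AvoidsRise (k d : ℕ) : List ℕ → Prop :=
  List.IsChain fun a b => d ≤ a → b + 1 < a + k

theorem avoidsRise_cons_cons {k d a b : ℕ} {s : List ℕ} :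
    AvoidsRise k d (a :: b :: s) ↔ (d ≤ a → b + 1 < a + k) ∧ AvoidsRise k d (b :: s) :=
  List.isChain_cons_cons

/-- The rise-avoiding left depth sequences of trees in `T_n`, which encode both the trees and the
Dyck paths to be counted. -/
def riseAvoidingSeqs (k d n : ℕ) : Set (List ℕ) :=
  {L | L.length = n + 1 ∧ IsLeftDepthSeq L ∧ AvoidsRise k d L}

namespace IsLeftDepthSeq

variable {k d : ℕ} {L M R R' : List ℕ}

theorem ne_nil (hL : IsLeftDepthSeq L) : L ≠ [] := by
  cases hL <;> exact List.cons_ne_nil _ _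

theorem getLast?_eq (hL : IsLeftDepthSeq L) : L.getLast? = some 0 := by
  induction hL with
  | zero => rfl
  | cons _ _ _ ih => rwa [List.getLast?_cons_cons]

theorem map_succ_append (hL : IsLeftDepthSeq L) (hR : IsLeftDepthSeq R) :
    IsLeftDepthSeq (L.map (· + 1) ++ R) := by
  induction hL with
  | zero =>
    cases hR with
    | zero => exact cons le_rfl le_rfl zero
    | cons hb hbc hs => exact cons le_rfl (Nat.le_add_left 1 _) (cons hb hbc hs)
  | cons _ hab _ ih => exact cons (Nat.le_add_left 1 _) (Nat.succ_le_succ hab) ih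

theorem map_succ_append_inj (hL : IsLeftDepthSeq L) (hM : IsLeftDepthSeq M)
    (h : L.map (· + 1) ++ R = M.map (· + 1) ++ R') : L = M ∧ R = R' := by
  induction hL generalizing M with
  | zero =>
    cases hM with
    | zero => simpa using h
    | cons ha _ _ =>
      simp only [List.map_cons, List.cons_append, List.cons.injEq] at h
      omega
  | cons ha _ _ ih =>
    cases hM with
    | zero =>
      simp only [List.map_cons, List.cons_append, List.cons.injEq] at h
      omega
    | cons _ _ hs =>
      obtain ⟨hhead, htail⟩ := List.cons.inj h
      obtain ⟨rfl, rfl⟩ := List.cons.inj (ih hs htail).1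
      exact ⟨by rw [Nat.succ_injective hhead], (ih hs htail).2⟩

theorem avoidsRise_map_succ_append (hL : IsLeftDepthSeq L) :
    AvoidsRise k d (L.map (· + 1) ++ R) ↔
      (d - 1 = 0 → ∀ b ∈ R.head?, b < k) ∧ AvoidsRise k (d - 1) L ∧ AvoidsRise k d R := by
  have hmap : AvoidsRise k d (L.map (· + 1)) ↔ AvoidsRise k (d - 1) L := by
    rw [AvoidsRise, AvoidsRise, List.isChain_map]
    exact iff_of_eq (congrArg (List.IsChain · L) (by ext a b; omega))
  have hjoin : (d ≤ 1 → ∀ b ∈ R.head?, b + 1 < 1 + k) ↔ (d - 1 = 0 → ∀ b ∈ R.head?, b < k) := by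
    simp only [Nat.sub_eq_zero_iff_le, Nat.add_comm 1 k, Nat.add_lt_add_iff_right]
  rw [← hmap, ← hjoin]
  simp only [AvoidsRise]
  rw [List.isChain_append, List.getLast?_map, hL.getLast?_eq]
  simp only [Option.map_some, Option.mem_some_iff, forall_eq', zero_add]
  tauto

theorem eq_of_map_truncMod_eq (hL : IsLeftDepthSeq L) (hM : IsLeftDepthSeq M)
    (hL' : AvoidsRise k d L) (hM' : AvoidsRise k d M)
    (h : L.map (truncMod d k) = M.map (truncMod d k)) : L = M := by
  induction hL generalizing M with
  | zero =>
    cases hM with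
    | zero => rfl
    | cons => simp at h
  | cons _ hab _ ih =>
    cases hM with
    | zero => simp at h
    | cons _ hab' hs =>
      obtain ⟨hlt, hrise⟩ := avoidsRise_cons_cons.1 hL'
      obtain ⟨hlt', hrise'⟩ := avoidsRise_cons_cons.1 hM'
      obtain ⟨hhead, htail⟩ := List.cons.inj h
      obtain ⟨rfl, rfl⟩ := List.cons.inj (ih hs hrise hrise' htail)
      rw [eq_of_truncMod_eq hab hab' hlt hlt' hhead]

-- The bound `a ≤ c` is what lets the induction continue: raising an entry only weakens the
-- constraint on its predecessor.
theorem exists_avoidsRise (hL : IsLeftDepthSeq L) (d : ℕ) (hk : 1 ≤ k) :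
    ∃ M, IsLeftDepthSeq M ∧ AvoidsRise k d M ∧
      List.Forall₂ (fun a c => a ≤ c ∧ truncMod d k a = truncMod d k c) L M := by
  induction hL with
  | zero => exact ⟨[0], zero, List.isChain_singleton 0, .cons ⟨le_rfl, rfl⟩ .nil⟩
  | cons ha hab _ ih =>
    obtain ⟨_ | ⟨c, M⟩, hM, hrise, hLM⟩ := ih
    · exact absurd rfl hM.ne_nil
    · have hbc := (List.forall₂_cons.1 hLM).1.1
      obtain ⟨x, hax, hxc, hlt, hx⟩ := exists_truncMod_eq d hk (hab.trans (Nat.succ_le_succ hbc))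
      exact ⟨x :: c :: M, cons (ha.trans hax) hxc hM, avoidsRise_cons_cons.2 ⟨hlt, hrise⟩,
        .cons ⟨hax, hx⟩ hLM⟩

end IsLeftDepthSeq

namespace BTree

variable {k d n : ℕ}

theorem ld_node (l r : BTree) : (node l r).ld = l.ld.map (· + 1) ++ r.ld := by
  simp [ld, leafDepths, Function.comp_def]

theorem length_ld : ∀ t : BTree, t.ld.length = t.numLeaves
  | leaf => rfl
  | node l r => by simp [ld_node, numLeaves, length_ld l, length_ld r]

theorem isLeftDepthSeq_ld : ∀ t : BTree, IsLeftDepthSeq t.ld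
  | leaf => .zero
  | node l r => by
    rw [ld_node]
    exact (isLeftDepthSeq_ld l).map_succ_append (isLeftDepthSeq_ld r)

theorem leaf_ld_ne_node_ld (l r : BTree) : leaf.ld ≠ (node l r).ld := by
  have hl := (isLeftDepthSeq_ld l).ne_nil
  rw [ld_node]
  cases hld : l.ld <;> simp_all [ld, leafDepths]

theorem ld_injective : Function.Injective ld := by
  intro t
  induction t with
  | leaf =>
    rintro (_ | ⟨l, r⟩) h
    · rfl
    · exact absurd h (leaf_ld_ne_node_ld l r)
  | node l r ihl ihr =>
    rintro (_ | ⟨l', r'⟩) h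
    · exact absurd h.symm (leaf_ld_ne_node_ld l r)
    · rw [ld_node, ld_node] at h
      obtain ⟨hl, hr⟩ := (isLeftDepthSeq_ld l).map_succ_append_inj (isLeftDepthSeq_ld l') h
      rw [ihl hl, ihr hr]

-- The subtree `u` at depth `j` on the left spine is replaced by `leaf ∧ u`.
theorem exists_ld_eq_succ_cons {t : BTree} {b j : ℕ} {s : List ℕ} (ht : t.ld = b :: s)
    (hj : j ≤ b) : ∃ t' : BTree, t'.ld = (j + 1) :: t.ld := by
  induction t generalizing b j s with
  | leaf =>
    obtain ⟨rfl, -⟩ := List.cons.inj ht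
    obtain rfl : j = 0 := by omega
    exact ⟨node leaf leaf, rfl⟩
  | node l r ihl _ =>
    cases j with
    | zero => exact ⟨node leaf (node l r), ld_node _ _⟩
    | succ j =>
      obtain ⟨c, u, hl⟩ := List.exists_cons_of_ne_nil (isLeftDepthSeq_ld l).ne_nil
      have hb : c + 1 = b := by
        rw [ld_node, hl] at ht
        exact (List.cons.inj ht).1
      obtain ⟨l', hl'⟩ := ihl hl (j := j) (by omega)
      exact ⟨node l' r, by rw [ld_node, hl', ld_node]; rfl⟩

theorem exists_ld_eq {L : List ℕ} (hL : IsLeftDepthSeq L) : ∃ t : BTree, t.ld = L := by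
  induction hL with
  | zero => exact ⟨leaf, rfl⟩
  | @cons a b s ha hab _ ih =>
    obtain ⟨t, ht⟩ := ih
    obtain ⟨t', ht'⟩ := exists_ld_eq_succ_cons ht (j := a - 1) (by omega)
    exact ⟨t', by rw [ht', ht, Nat.sub_add_cancel ha]⟩

theorem bijOn_ld :
    Set.BijOn ld {t | t.numLeaves = n + 1 ∧ AvoidsRise k d t.ld} (riseAvoidingSeqs k d n) := by
  refine ⟨fun t ht => ⟨(length_ld t).trans ht.1, isLeftDepthSeq_ld t, ht.2⟩,
    ld_injective.injOn, ?_⟩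
  rintro L ⟨hlen, hL, hrise⟩
  obtain ⟨t, rfl⟩ := exists_ld_eq hL
  exact ⟨t, ⟨(length_ld t).symm.trans hlen, hrise⟩, rfl⟩

theorem containsAt_leaf {s : BTree} {δ : ℕ} :
    ContainsAt leaf s δ ↔ δ = 0 ∧ IsTopOf s leaf := by
  constructor
  · rintro ⟨_ | ⟨_, _⟩, u, hu, rfl, hs⟩
    · exact ⟨rfl, Option.some.inj hu ▸ hs⟩
    · simp [subtreeAt] at hu
  · rintro ⟨rfl, hs⟩
    exact ⟨[], leaf, rfl, rfl, hs⟩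

theorem containsAt_node {l r s : BTree} {δ : ℕ} :
    ContainsAt (node l r) s δ ↔ (δ = 0 ∧ IsTopOf s (node l r)) ∨
      (∃ δ', δ = δ' + 1 ∧ ContainsAt l s δ') ∨ ContainsAt r s δ := by
  constructor
  · rintro ⟨_ | ⟨_ | _, p⟩, u, hu, rfl, hs⟩
    · exact .inl ⟨rfl, Option.some.inj hu ▸ hs⟩
    · exact .inr (.inl ⟨p.count Dir.L, List.count_cons_self, p, u, hu, rfl, hs⟩)
    · exact .inr (.inr ⟨p, u, hu, (List.count_cons_of_ne (by decide)).symm, hs⟩)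
  · rintro (⟨rfl, hs⟩ | ⟨_, rfl, p, u, hu, rfl, hs⟩ | ⟨p, u, hu, rfl, hs⟩)
    · exact ⟨[], node l r, rfl, rfl, hs⟩
    · exact ⟨Dir.L :: p, u, hu, List.count_cons_self, hs⟩
    · exact ⟨Dir.R :: p, u, hu, List.count_cons_of_ne (by decide), hs⟩

theorem forall_avoidsAt_node {l r s : BTree} {e : ℕ} :
    (∀ δ, e ≤ δ → AvoidsAt (node l r) s δ) ↔ (e = 0 → ¬ IsTopOf s (node l r)) ∧
      (∀ δ, e - 1 ≤ δ → AvoidsAt l s δ) ∧ (∀ δ, e ≤ δ → AvoidsAt r s δ) := by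
  simp only [AvoidsAt, containsAt_node, not_or]
  constructor
  · intro h
    refine ⟨fun he hs => (h 0 he.le).1 ⟨rfl, hs⟩, fun δ hδ hl => ?_, fun δ hδ => (h δ hδ).2.2⟩
    exact (h (δ + 1) (by omega)).2.1 ⟨δ, rfl, hl⟩
  · rintro ⟨htop, hl, hr⟩ δ hδ
    refine ⟨?_, ?_, hr δ hδ⟩
    · rintro ⟨rfl, hs⟩
      exact htop (by omega) hs
    · rintro ⟨δ', rfl, hδ'⟩
      exact hl δ' (by omega) hδ'

theorem comb_succ (k : ℕ) : comb (k + 1) = node (comb k) leaf := by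
  simp [comb, leftAssoc, List.replicate_succ']

theorem isTopOf_comb_iff : ∀ {k : ℕ} {t : BTree},
    IsTopOf (comb k) t ↔ ∀ a ∈ t.ld.head?, k ≤ a
  | 0, t => by simp [comb, leftAssoc, IsTopOf]
  | k + 1, leaf => by simp [comb_succ, IsTopOf, ld, leafDepths]
  | k + 1, node l r => by
    obtain ⟨a, s, hl⟩ := List.exists_cons_of_ne_nil (isLeftDepthSeq_ld l).ne_nil
    rw [comb_succ, IsTopOf, isTopOf_comb_iff, ld_node, hl]
    simp [IsTopOf]

theorem forall_avoidsAt_comb1_iff : ∀ {t : BTree} {d : ℕ},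
    (∀ δ, d - 1 ≤ δ → AvoidsAt t (comb1 k) δ) ↔ AvoidsRise k d t.ld
  | leaf, d => by simp [AvoidsAt, containsAt_leaf, comb1, IsTopOf, AvoidsRise, ld, leafDepths]
  | node l r, d => by
    have htop : IsTopOf (comb1 k) (node l r) ↔ ¬ ∀ b ∈ r.ld.head?, b < k := by
      obtain ⟨b, s, hr⟩ := List.exists_cons_of_ne_nil (isLeftDepthSeq_ld r).ne_nil
      simp [comb1, IsTopOf, isTopOf_comb_iff, hr]
    rw [forall_avoidsAt_node, forall_avoidsAt_comb1_iff, forall_avoidsAt_comb1_iff, ld_node,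
      (isLeftDepthSeq_ld l).avoidsRise_map_succ_append, htop, not_not]

theorem existsUnique_avoidsRise_and_dkRel (d : ℕ) (hk : 1 ≤ k) (t : BTree) :
    ∃! t' : BTree, AvoidsRise k d t'.ld ∧ DkRel d k t t' := by
  obtain ⟨M, hM, hrise, hLM⟩ := (isLeftDepthSeq_ld t).exists_avoidsRise d hk
  obtain ⟨t', rfl⟩ := exists_ld_eq hM
  have hrel : DkRel d k t t' := by
    rw [dkRel_iff, ← List.forall₂_eq_eq_eq, List.forall₂_map_left_iff, List.forall₂_map_right_iff]
    exact hLM.imp fun _ _ h => h.2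
  refine ⟨t', ⟨hrise, hrel⟩, fun u hu => ld_injective ?_⟩
  exact (isLeftDepthSeq_ld u).eq_of_map_truncMod_eq hM hu.1 hrise
    (dkRel_iff.1 (dkRel_equivalence.trans (dkRel_equivalence.symm hu.2) hrel))

end BTree

theorem DkRel.numLeaves_eq {d k : ℕ} {t t' : BTree} (h : DkRel d k t t') :
    t.numLeaves = t'.numLeaves := by
  rw [← t.length_ld, ← t'.length_ld, h.1.length_eq]

theorem Cdk_eq_card_avoidsRise {k : ℕ} (d n : ℕ) (hk : 1 ≤ k) :
    Cdk d k n = Nat.card {t : BTree // t.numLeaves = n + 1 ∧ AvoidsRise k d t.ld} := by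
  have hunique (t : Tn n) : ∃! t' : Tn n, AvoidsRise k d t'.1.ld ∧ DkRel d k t.1 t'.1 := by
    obtain ⟨t', ⟨hrise, hrel⟩, huniq⟩ := BTree.existsUnique_avoidsRise_and_dkRel d hk t.1
    exact ⟨⟨t', hrel.numLeaves_eq.symm.trans t.2⟩, ⟨hrise, hrel⟩,
      fun u hu => Subtype.ext (huniq u.1 hu)⟩
  exact (card_quot_eq_card_subtype (dkRel_equivalence.comap Subtype.val) hunique).trans
    (Nat.card_congr (Equiv.subtypeSubtypeEquivSubtypeInter _ fun t : BTree => AvoidsRise k d t.ld))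

section Dyck

variable {k d h n : ℕ} {w : List Step}

/-- `w` is the part of a Dyck path that follows a point at height `h`. -/
def IsDyckFrom (h : ℕ) (w : List Step) : Prop :=
  w.count Step.U + h = w.count Step.D ∧
    ∀ p : List Step, p <+: w → p.count Step.D ≤ p.count Step.U + h

/-- The heights of the starting points of the down-steps of a path `w` starting at height `h`,
followed by the height of its endpoint. Truncated subtraction does not occur on Dyck paths. -/
def descentHeights : ℕ → List Step → List ℕ
  | h, [] => [h]
  | h, Step.U :: w => descentHeights (h + 1) w
  | h, Step.D :: w => h :: descentHeights (h - 1) w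

/-- Avoidance of `DU^k` at every height at least `d` by a path `w` that starts at height `z`. -/
def AvoidsDUkFrom (k d : ℕ) (z : ℤ) (w : List Step) : Prop :=
  ∀ l₁ l₂ : List Step, w = l₁ ++ Step.D :: (List.replicate k Step.U ++ l₂) →
    z + (l₁.count Step.U - l₁.count Step.D) < d

theorem isDyckFrom_nil : IsDyckFrom h [] ↔ h = 0 := by
  simp [IsDyckFrom]

theorem isDyckFrom_U_cons : IsDyckFrom h (Step.U :: w) ↔ IsDyckFrom (h + 1) w := by
  simp [IsDyckFrom, forall_prefix_cons_iff, Nat.add_assoc, Nat.add_comm 1 h]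

theorem isDyckFrom_D_cons : IsDyckFrom h (Step.D :: w) ↔ 1 ≤ h ∧ IsDyckFrom (h - 1) w := by
  rcases h with _ | h
  · simp only [nonpos_iff_eq_zero, one_ne_zero, false_and, iff_false]
    exact fun hw => by simpa using hw.2 [Step.D] (by simp)
  · simp [IsDyckFrom, forall_prefix_cons_iff, ← Nat.add_assoc]

theorem isDyckFrom_replicate_U_append (m : ℕ) :
    IsDyckFrom h (List.replicate m Step.U ++ w) ↔ IsDyckFrom (h + m) w := by
  induction m generalizing h with
  | zero => rfl
  | succ m ih =>
    rw [List.replicate_succ, List.cons_append, isDyckFrom_U_cons, ih, Nat.add_right_comm,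
      Nat.add_assoc]

theorem length_descentHeights : (descentHeights h w).length = w.count Step.D + 1 := by
  fun_induction descentHeights h w <;> simp_all

theorem isDyck_iff : IsDyck n w ↔ (descentHeights 0 w).length = n + 1 ∧ IsDyckFrom 0 w := by
  rw [length_descentHeights, IsDyck, IsDyckFrom]
  simp only [Nat.add_zero, Nat.add_right_cancel_iff]
  grind

theorem descentHeights_replicate_U_append (m : ℕ) :
    descentHeights h (List.replicate m Step.U ++ w) = descentHeights (h + m) w := by
  induction m generalizing h with
  | zero => rfl
  | succ m ih =>
    rw [List.replicate_succ, List.cons_append, descentHeights, ih, Nat.add_right_comm,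
      Nat.add_assoc]

theorem exists_descentHeights_eq_cons (h : ℕ) (w : List Step) :
    ∃ b s, descentHeights h w = b :: s ∧ ∀ k, List.replicate k Step.U <+: w ↔ h + k ≤ b := by
  induction w generalizing h with
  | nil => exact ⟨h, [], rfl, fun k => by simp⟩
  | cons x w ih =>
    cases x with
    | U =>
      obtain ⟨b, s, hbs, hb⟩ := ih (h + 1)
      have hle : h + 1 ≤ b := (hb 0).1 List.nil_prefix
      refine ⟨b, s, hbs, fun k => ?_⟩
      cases k with
      | zero => exact iff_of_true List.nil_prefix (by omega)
      | succ k => rw [List.replicate_succ, List.prefix_cons_inj, hb]; omega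
    | D =>
      refine ⟨h, _, rfl, fun k => ?_⟩
      cases k <;> simp [List.replicate_succ]

theorem le_of_descentHeights_eq_cons {b : ℕ} {s : List ℕ} (hw : descentHeights h w = b :: s) :
    h ≤ b := by
  obtain ⟨_, _, hbs, hb⟩ := exists_descentHeights_eq_cons h w
  obtain ⟨rfl, -⟩ := List.cons.inj (hbs.symm.trans hw)
  exact (hb 0).1 List.nil_prefix

theorem descentHeights_succ_ne_cons {s : List ℕ} : descentHeights (h + 1) w ≠ h :: s :=
  fun hw => Nat.not_succ_le_self h (le_of_descentHeights_eq_cons hw)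

theorem descentHeights_ne_nil : descentHeights h w ≠ [] := by
  simp [← List.length_pos_iff, length_descentHeights]

theorem descentHeights_injective (h : ℕ) : Function.Injective (descentHeights h) := by
  intro w w' heq
  induction w generalizing h w' with
  | nil =>
    rcases w' with _ | ⟨_ | _, w'⟩
    · rfl
    · exact absurd heq.symm descentHeights_succ_ne_cons
    · exact absurd (List.cons.inj heq).2.symm descentHeights_ne_nil
  | cons x w ih =>
    rcases x with _ | _ <;> rcases w' with _ | ⟨_ | _, w'⟩
    · exact absurd heq descentHeights_succ_ne_cons
    · rw [ih (h + 1) heq]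
    · exact absurd heq descentHeights_succ_ne_cons
    · exact absurd (List.cons.inj heq).2 descentHeights_ne_nil
    · exact absurd heq.symm descentHeights_succ_ne_cons
    · rw [ih (h - 1) (List.cons.inj heq).2]

theorem IsDyckFrom.isLeftDepthSeq_descentHeights (hw : IsDyckFrom h w) :
    IsLeftDepthSeq (descentHeights h w) := by
  induction w generalizing h with
  | nil =>
    obtain rfl := isDyckFrom_nil.1 hw
    exact .zero
  | cons x w ih =>
    cases x with
    | U => exact ih (isDyckFrom_U_cons.1 hw)
    | D =>
      obtain ⟨hh, hw⟩ := isDyckFrom_D_cons.1 hw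
      obtain ⟨b, s, hbs, -⟩ := exists_descentHeights_eq_cons (h - 1) w
      have hle := le_of_descentHeights_eq_cons hbs
      have hs := ih hw
      rw [descentHeights]
      rw [hbs] at hs ⊢
      exact .cons hh (by omega) hs

theorem exists_descentHeights_eq {L : List ℕ} (hL : IsLeftDepthSeq L) (hh : ∀ a ∈ L.head?, h ≤ a) :
    ∃ w, IsDyckFrom h w ∧ descentHeights h w = L := by
  induction hL generalizing h with
  | zero =>
    obtain rfl : h = 0 := by simpa using hh
    exact ⟨[], isDyckFrom_nil.2 rfl, rfl⟩
  | @cons a b s ha hab _ ih =>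
    have hha : h + (a - h) = a := Nat.add_sub_cancel' (hh a rfl)
    obtain ⟨w, hw, hws⟩ := ih (h := a - 1) (by simpa using hab)
    refine ⟨List.replicate (a - h) Step.U ++ Step.D :: w, ?_, ?_⟩
    · rw [isDyckFrom_replicate_U_append, hha]
      exact isDyckFrom_D_cons.2 ⟨ha, hw⟩
    · rw [descentHeights_replicate_U_append, hha, descentHeights, hws]

theorem avoidsDUkFrom_U_cons {z : ℤ} :
    AvoidsDUkFrom k d z (Step.U :: w) ↔ AvoidsDUkFrom k d (z + 1) w := by
  constructor
  · intro hav l₁ l₂ hw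
    have hlt := hav (Step.U :: l₁) l₂ (by rw [hw, List.cons_append])
    rw [List.count_cons_self, List.count_cons_of_ne (by decide), Nat.cast_succ] at hlt
    linarith
  · intro hav l₁ l₂ hw
    obtain ⟨-, hhead⟩ | ⟨l, rfl, htail⟩ := List.cons_eq_append_iff.1 hw
    · simp at hhead
    · have hlt := hav l l₂ htail
      rw [List.count_cons_self, List.count_cons_of_ne (by decide), Nat.cast_succ]
      linarith

theorem avoidsDUkFrom_D_cons {z : ℤ} : AvoidsDUkFrom k d z (Step.D :: w) ↔
    (d ≤ z → ¬ List.replicate k Step.U <+: w) ∧ AvoidsDUkFrom k d (z - 1) w := by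
  constructor
  · refine fun hav => ⟨?_, fun l₁ l₂ hw => ?_⟩
    · rintro hz ⟨l₂, rfl⟩
      simpa [hz.not_gt] using hav [] l₂ rfl
    · have hlt := hav (Step.D :: l₁) l₂ (by rw [hw, List.cons_append])
      rw [List.count_cons_self, List.count_cons_of_ne (by decide), Nat.cast_succ] at hlt
      linarith
  · rintro ⟨hhead, hav⟩ l₁ l₂ hw
    obtain ⟨rfl, htail⟩ | ⟨l, rfl, htail⟩ := List.cons_eq_append_iff.1 hw
    · have hz : ¬ d ≤ z := fun hz => hhead hz ⟨l₂, (List.cons.inj htail).2⟩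
      simpa using hz
    · have hlt := hav l l₂ htail
      rw [List.count_cons_self, List.count_cons_of_ne (by decide), Nat.cast_succ]
      linarith

theorem IsDyckFrom.avoidsDUkFrom_iff (hw : IsDyckFrom h w) :
    AvoidsDUkFrom k d h w ↔ AvoidsRise k d (descentHeights h w) := by
  induction w generalizing h with
  | nil => simp [AvoidsDUkFrom, descentHeights, AvoidsRise]
  | cons x w ih =>
    cases x with
    | U =>
      rw [avoidsDUkFrom_U_cons, descentHeights, ← ih (isDyckFrom_U_cons.1 hw)]
      norm_cast
    | D =>
      obtain ⟨hh, hw⟩ := isDyckFrom_D_cons.1 hw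
      obtain ⟨b, s, hbs, hprefix⟩ := exists_descentHeights_eq_cons (h - 1) w
      have hstep : (d ≤ h → ¬ List.replicate k Step.U <+: w) ↔ (d ≤ h → b + 1 < h + k) := by
        rw [hprefix]
        omega
      rw [avoidsDUkFrom_D_cons, Nat.cast_le, hstep, ← Nat.cast_pred hh, ih hw, descentHeights, hbs]
      exact avoidsRise_cons_cons.symm

theorem IsDyckFrom.avoidsDUk_iff (hw : IsDyckFrom 0 w) :
    AvoidsDUk k d w ↔ AvoidsRise k d (descentHeights 0 w) := by
  rw [← hw.avoidsDUkFrom_iff, AvoidsDUk, AvoidsDUkFrom]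
  simp only [Nat.cast_zero, zero_add]

theorem bijOn_descentHeights :
    Set.BijOn (descentHeights 0) {w | IsDyck n w ∧ AvoidsDUk k d w} (riseAvoidingSeqs k d n) := by
  refine ⟨?_, (descentHeights_injective 0).injOn, ?_⟩
  · rintro w ⟨hw, hav⟩
    obtain ⟨hlen, hw⟩ := isDyck_iff.1 hw
    exact ⟨hlen, hw.isLeftDepthSeq_descentHeights, hw.avoidsDUk_iff.1 hav⟩
  · rintro L ⟨hlen, hL, hrise⟩
    obtain ⟨w, hw, rfl⟩ := exists_descentHeights_eq (h := 0) hL (by simp)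
    exact ⟨w, ⟨isDyck_iff.2 ⟨hlen, hw⟩, hw.avoidsDUk_iff.2 hrise⟩, rfl⟩

end Dyck

/-- for `k,d ≥ 1` and `n ≥ 0`, `C^d_{k,n}` equals both the number of binary
trees with `n` internal nodes (i.e. `n+1` leaves) avoiding `comb_k^1` at every left depth
at least `d-1`, and the number of Dyck paths of length `2n` avoiding `DU^k` at every
height at least `d`. -/
theorem stmt13 (k d n : ℕ) (hk : 1 ≤ k) (hd : 1 ≤ d) :
    Cdk d k n =
      Nat.card {t : BTree // t.numLeaves = n + 1 ∧
        ∀ δ, d - 1 ≤ δ → AvoidsAt t (comb1 k) δ} ∧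
    Cdk d k n = Nat.card {w : List Step // IsDyck n w ∧ AvoidsDUk k d w} := by
  have hclasses := Cdk_eq_card_avoidsRise d n hk
  refine ⟨?_, ?_⟩
  · simpa only [BTree.forall_avoidsAt_comb1_iff] using hclasses
  · exact hclasses.trans (Nat.card_congr
      ((BTree.bijOn_ld.equiv _).trans (bijOn_descentHeights.equiv _).symm))
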